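/- Suppose Assumptions 1 and 2 hold, and let ε > 0 be such that εI_N ≺ R (Loewner order). Then there exists n_ε ≥ 1 such that for every n ≥ n_ε one has ∇²F_n(h_n) ⪰ R − εI_N (in particular ∇²F_n(h_n) is positive definite) and F_n(h_n) − inf F_n ≤ (1/2)(1 + ε) ∇F_n(h_n)ᵀ (∇²F_n(h_n))⁻¹ ∇F_n(h_n). -/

import Mathlib

open Matrix Filter Topology

noncomputable section

/-- Identification of `EuclideanSpace ℝ (Fin N)` with plain tuples `Fin N → ℝ`. -/
def toEuc {N : ℕ} (v : Fin N → ℝ) : EuclideanSpace ℝ (Fin N) :=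
  (WithLp.equiv 2 (Fin N → ℝ)).symm v

def ofEuc {N : ℕ} (v : EuclideanSpace ℝ (Fin N)) : Fin N → ℝ :=
  WithLp.equiv 2 (Fin N → ℝ) v

/-- The quadratic form `vᵀ M v`. -/
def qf {N : ℕ} (M : Matrix (Fin N) (Fin N) ℝ)
    (v : EuclideanSpace ℝ (Fin N)) : ℝ :=
  ofEuc v ⬝ᵥ M.mulVec (ofEuc v)

/-- Matrix-vector product `M v`, viewed in `EuclideanSpace`. -/
def mulE {N : ℕ} (M : Matrix (Fin N) (Fin N) ℝ)
    (v : EuclideanSpace ℝ (Fin N)) : EuclideanSpace ℝ (Fin N) :=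
  toEuc (M.mulVec (ofEuc v))

/-- The range of the matrix `D`, i.e. `{D u : u ∈ ℝ^M}`, as a subset of `EuclideanSpace`. -/
def rangeD {N M : ℕ} (D : Matrix (Fin N) (Fin M) ℝ) : Set (EuclideanSpace ℝ (Fin N)) :=
  {x | ∃ u : Fin M → ℝ, x = toEuc (D.mulVec u)}

open scoped Classical in
/-- The Moore–Penrose pseudo-inverse of a real matrix, defined via its characterizing
(Penrose) equations; it exists and is unique for every real matrix. -/
def pinv {m n : ℕ} (A : Matrix (Fin m) (Fin n) ℝ) : Matrix (Fin n) (Fin m) ℝ :=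
  if h : ∃ B : Matrix (Fin n) (Fin m) ℝ,
      A * B * A = A ∧ B * A * B = B ∧ (A * B)ᵀ = A * B ∧ (B * A)ᵀ = B * A
  then h.choose else 0

end


section Aux

set_option linter.unusedSectionVars false

variable {E : Type*} [NormedAddCommGroup E] [InnerProductSpace ℝ E] [FiniteDimensional ℝ E]

lemma aux_abs_inner_clm (A : E →L[ℝ] E) (d : E) : |inner ℝ d (A d)| ≤ ‖A‖ * ‖d‖ ^ 2 := by
  have h1 := abs_real_inner_le_norm d (A d)
  have h2 := A.le_opNorm d
  nlinarith [norm_nonneg d]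

lemma aux_quad_grad (A : E →L[ℝ] E) (hA : ∀ u v, inner ℝ (A u) v = inner ℝ u (A v)) (x : E) :
    HasGradientAt (fun y => (1/2) * inner ℝ y (A y)) (A x) x := by
  rw [hasGradientAt_iff_hasFDerivAt]
  have h1 : HasFDerivAt (fun y : E => inner ℝ y (A y)) _ x :=
    (hasFDerivAt_id x).inner ℝ (A.hasFDerivAt (x := x))
  have h2 := h1.const_mul (1/2 : ℝ)
  refine h2.congr_fderiv ?_
  ext v
  simp [fderivInnerCLM_apply]
  rw [← hA x v, real_inner_comm (A x) v]
  ring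

lemma aux_inner_grad (b : E) (x : E) :
    HasGradientAt (fun y => inner ℝ b y) b x := by
  rw [hasGradientAt_iff_hasFDerivAt]
  exact ((InnerProductSpace.toDual ℝ E) b).hasFDerivAt

lemma aux_taylor (Ψ : E → ℝ) (g : E → E) (H : E → E →L[ℝ] E)
    (hg : ∀ x, HasGradientAt Ψ (g x) x) (hH : ∀ x, HasFDerivAt g (H x) x)
    (hsym : ∀ x u v, inner ℝ (H x u) v = inner ℝ u (H x v))
    (hcont : Continuous H) (C δ : ℝ) (hδ : 0 < δ) :
    ∃ η > 0, ∀ x, ‖x‖ ≤ C → ∀ d, ‖d‖ ≤ η →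
      |Ψ (x + d) - Ψ x - inner ℝ (g x) d - (1/2) * inner ℝ d (H x d)| ≤ δ * ‖d‖ ^ 2 := by
  have hc : IsCompact (Metric.closedBall (0:E) (C+1)) := isCompact_closedBall _ _
  have hu := hc.uniformContinuousOn_of_continuous hcont.continuousOn
  rw [Metric.uniformContinuousOn_iff] at hu
  obtain ⟨η, hη, hu⟩ := hu δ hδ
  refine ⟨min (η/2) 1, by positivity, ?_⟩
  intro x hx d hd
  have hd1 : ‖d‖ ≤ η/2 := hd.trans (min_le_left _ _)
  have hd2 : ‖d‖ ≤ 1 := hd.trans (min_le_right _ _)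
  have hxb : x ∈ Metric.closedBall (0:E) (C+1) := by
    simp; linarith
  have key : ∀ z ∈ Metric.closedBall x ‖d‖, ‖H z - H x‖ ≤ δ := by
    intro z hz
    rw [Metric.mem_closedBall, dist_eq_norm] at hz
    have hzb : z ∈ Metric.closedBall (0:E) (C+1) := by
      have : ‖z‖ ≤ ‖x‖ + ‖z - x‖ := by
        simpa using norm_add_le x (z - x)
      simp; linarith
    have := hu z hzb x hxb (by rw [dist_eq_norm]; linarith)
    rw [dist_eq_norm] at this
    exact this.le
  have hxm : x ∈ Metric.closedBall x ‖d‖ := Metric.mem_closedBall_self (norm_nonneg _)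
  have key2 : ∀ z ∈ Metric.closedBall x ‖d‖, ‖g z - g x - H x (z - x)‖ ≤ δ * ‖d‖ := by
    intro z hz
    have := (convex_closedBall x ‖d‖).norm_image_sub_le_of_norm_hasFDerivWithin_le
      (f := fun y => g y - H x y) (f' := fun y => H y - H x) (C := δ)
      (fun y _ => ((hH y).sub (H x).hasFDerivAt).hasFDerivWithinAt) key hxm hz
    have e : g z - g x - H x (z - x) = g z - H x z - (g x - H x x) := by
      rw [map_sub]; abel
    rw [e]
    refine this.trans ?_
    rw [Metric.mem_closedBall, dist_eq_norm] at hz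
    gcongr
  have hder : ∀ y, HasGradientAt (fun y => Ψ y - inner ℝ (g x - H x x) y
      - (1/2) * inner ℝ y (H x y)) (g y - (g x - H x x) - H x y) y := by
    intro y
    have h1 := (hasGradientAt_iff_hasFDerivAt.1 (hg y))
    have h2 := (hasGradientAt_iff_hasFDerivAt.1 (aux_inner_grad (g x - H x x) y))
    have h3 := (hasGradientAt_iff_hasFDerivAt.1 (aux_quad_grad (H x) (hsym x) y))
    rw [hasGradientAt_iff_hasFDerivAt]
    refine ((h1.sub h2).sub h3).congr_fderiv ?_
    simp only [map_sub]
  have hxd : x + d ∈ Metric.closedBall x ‖d‖ := by simp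
  have := (convex_closedBall x ‖d‖).norm_image_sub_le_of_norm_hasFDerivWithin_le
      (C := δ * ‖d‖)
      (fun y _ => (hasGradientAt_iff_hasFDerivAt.1 (hder y)).hasFDerivWithinAt)
      (fun y hy => by
        rw [LinearIsometryEquiv.norm_map]
        have e : g y - (g x - H x x) - H x y = g y - g x - H x (y - x) := by
          rw [map_sub]; abel
        rw [e]; exact key2 y hy) hxm hxd
  rw [Real.norm_eq_abs] at this
  have e1 : x + d - x = d := by abel
  rw [e1] at this
  have e2 : Ψ (x + d) - Ψ x - inner ℝ (g x) d - (1/2) * inner ℝ d (H x d) =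
    Ψ (x + d) - inner ℝ (g x - H x x) (x + d) - 1 / 2 * inner ℝ (x + d) (H x (x + d)) -
        (Ψ x - inner ℝ (g x - H x x) x - 1 / 2 * inner ℝ x (H x x)) := by
    simp only [map_add, inner_add_left, inner_add_right, inner_sub_left]
    have s1 := hsym x x d
    have s2 := real_inner_comm d (H x x)
    rw [← s1, s2]
    ring
  rw [e2]
  calc _ ≤ _ := this
    _ = _ := by ring

lemma aux_conv_grad (Ψ : E → ℝ) (g : E → E) (hg : ∀ x, HasGradientAt Ψ (g x) x)
    (hconv : ConvexOn ℝ Set.univ Ψ) (x d : E) :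
    Ψ x + inner ℝ (g x) d ≤ Ψ (x + d) := by
  let φ : ℝ → ℝ := fun t => Ψ (x + t • d)
  have hφ : ConvexOn ℝ Set.univ φ := by
    have := hconv.comp_affineMap (AffineMap.lineMap x (x + d) : ℝ →ᵃ[ℝ] E)
    refine ⟨convex_univ, fun a _ b _ s t hs ht hst => ?_⟩
    have h2 := this.2 (x := a) (by simp) (y := b) (by simp) hs ht hst
    simpa [φ, AffineMap.lineMap_apply, add_comm] using h2
  have hd : HasDerivAt φ (inner ℝ (g x) d) 0 := by
    have hl : HasDerivAt (fun t : ℝ => x + t • d) d 0 := by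
      simpa using ((hasDerivAt_id (0:ℝ)).smul_const d).const_add x
    have h1 : HasFDerivAt Ψ (InnerProductSpace.toDual ℝ E (g x)) (x + (0:ℝ) • d) := by
      simpa using hasGradientAt_iff_hasFDerivAt.1 (hg x)
    have : HasDerivAt φ (InnerProductSpace.toDual ℝ E (g x) d) 0 := h1.comp_hasDerivAt (0:ℝ) hl
    rwa [InnerProductSpace.toDual_apply_apply] at this
  have := hφ.le_slope_of_hasDerivAt (x := 0) (y := 1) (by simp) (by simp) one_pos hd
  simp [slope, φ] at this
  linarith

lemma aux_hess_nonneg (Ψ : E → ℝ) (g : E → E) (H : E → E →L[ℝ] E)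
    (hg : ∀ x, HasGradientAt Ψ (g x) x) (hH : ∀ x, HasFDerivAt g (H x) x)
    (hsym : ∀ x u v, inner ℝ (H x u) v = inner ℝ u (H x v))
    (hcont : Continuous H) (hconv : ConvexOn ℝ Set.univ Ψ) (x d : E) :
    0 ≤ inner ℝ d (H x d) := by
  by_contra! hneg
  have hd : 0 < ‖d‖ := by
    rw [norm_pos_iff]; rintro rfl; simp at hneg
  obtain ⟨η, hη, ht⟩ := aux_taylor Ψ g H hg hH hsym hcont ‖x‖
    (-(inner ℝ d (H x d)) / (4 * ‖d‖^2)) (div_pos (by linarith) (by positivity))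
  have h1 := ht x le_rfl ((η / ‖d‖) • d) (by
    rw [norm_smul, Real.norm_eq_abs, abs_of_pos (by positivity)]
    field_simp; exact le_rfl)
  have h2 := aux_conv_grad Ψ g hg hconv x ((η / ‖d‖) • d)
  have h3 := (abs_le.1 h1).2
  rw [norm_smul, Real.norm_eq_abs, abs_of_pos (by positivity : 0 < η / ‖d‖)] at h3
  have h4 : inner ℝ ((η / ‖d‖) • d) (H x ((η / ‖d‖) • d)) =
     (η / ‖d‖)^2 * inner ℝ d (H x d) := by
    simp only [map_smul, inner_smul_left, inner_smul_right]; simp; ring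
  rw [h4] at h3
  have h5 : -(inner ℝ d (H x d)) / (4 * ‖d‖^2) * (η / ‖d‖ * ‖d‖)^2 =
     (η / ‖d‖)^2 * (-(inner ℝ d (H x d)) / 4) := by
    field_simp
  rw [h5] at h3
  have h6 : 0 < (η / ‖d‖)^2 := by positivity
  nlinarith

lemma aux_sq (S : E →L[ℝ] E) (hsym : ∀ u v, inner ℝ (S u) v = inner ℝ u (S v))
    (hpos : ∀ u, 0 ≤ inner ℝ u (S u)) (g w d : E) (hw : S w = g) (ε : ℝ) (hε : 0 < ε) :
    -((1/2) * (1 + ε) * inner ℝ g w) ≤ inner ℝ g d + 1 / (2 * (1 + ε)) * inner ℝ d (S d) := by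
  have h1 := hpos (d + (1 + ε) • w)
  simp only [map_add, map_smul, inner_add_left, inner_add_right, inner_smul_left,
    inner_smul_right, hw] at h1
  have h2 : inner ℝ w (S d) = inner ℝ g d := by rw [← hsym, hw]
  rw [h2, real_inner_comm g d, real_inner_comm g w] at h1
  simp at h1
  have h3 : inner ℝ g d + 1 / (2 * (1 + ε)) * inner ℝ d (S d) + (1/2) * (1 + ε) * inner ℝ g w
     = 1 / (2 * (1 + ε)) * (inner ℝ d (S d) + (1 + ε) * inner ℝ g d +
      (1 + ε) * (inner ℝ g d + (1 + ε) * inner ℝ g w)) := by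
    field_simp; ring
  have h4 : 0 ≤ 1 / (2 * (1 + ε)) * (inner ℝ d (S d) + (1 + ε) * inner ℝ g d +
      (1 + ε) * (inner ℝ g d + (1 + ε) * inner ℝ g w)) := by
    refine mul_nonneg (by positivity) ?_
    linarith
  linarith

lemma aux_grad_zero (u e G : ℕ → ℝ) (c m : ℝ) (hc : 0 < c) (he : Summable e) (he0 : ∀ n, 0 ≤ e n)
    (hG : ∀ n, 0 ≤ G n) (hm : ∀ n, m ≤ u n) (hstep : ∀ n, u (n+1) ≤ u n - c * G n ^ 2 + e n) :
    Tendsto G atTop (𝓝 0) := by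
  have h1 : ∀ n, ∑ i ∈ Finset.range n, c * G i ^ 2 ≤ u 0 - u n + ∑ i ∈ Finset.range n, e i := by
    intro n
    induction n with
    | zero => simp
    | succ k ih =>
      rw [Finset.sum_range_succ, Finset.sum_range_succ]
      linarith [hstep k]
  have h2 : Summable (fun n => c * G n ^ 2) := by
    refine summable_of_sum_range_le (c := u 0 - m + ∑' i, e i) (fun n => by positivity) ?_
    intro n
    have := he.sum_le_tsum (Finset.range n) (fun i _ => he0 i)
    linarith [h1 n, hm n]
  have h3 := h2.tendsto_atTop_zero
  have h4 : Tendsto (fun n => Real.sqrt (c⁻¹ * (c * G n ^ 2))) atTop (𝓝 0) := by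
    have := (h3.const_mul c⁻¹).sqrt
    simpa using this
  refine h4.congr fun n => ?_
  rw [inv_mul_cancel_left₀ hc.ne', Real.sqrt_sq (hG n)]

lemma aux_expand (T : E →L[ℝ] E) (hT : ∀ u v, inner ℝ (T u) v = inner ℝ u (T v)) (x d : E) :
    (1/2) * inner ℝ (x + d) (T (x + d)) =
      (1/2) * inner ℝ x (T x) + inner ℝ (T x) d + (1/2) * inner ℝ d (T d) := by
  simp only [map_add, inner_add_left, inner_add_right]
  rw [← hT x d, real_inner_comm (T x) d]
  ring

/-- The operator form of the statement. -/
lemma aux_main (T : E →L[ℝ] E) (Tn : ℕ → E →L[ℝ] E) (r : E) (rn : ℕ → E)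
    (Ψ : E → ℝ) (g : E → E) (H : E → E →L[ℝ] E)
    (hbdd : BddBelow (Set.range Ψ)) (hconv : ConvexOn ℝ Set.univ Ψ)
    (hg : ∀ x, HasGradientAt Ψ (g x) x) (hH : ∀ x, HasFDerivAt g (H x) x)
    (hsym : ∀ x u v, inner ℝ (H x u) v = inner ℝ u (H x v))
    (hcont : Continuous H)
    (hTsym : ∀ n u v, inner ℝ (Tn n u) v = inner ℝ u (Tn n v))
    (hTpos : ∀ n u, 0 ≤ inner ℝ u (Tn n u))
    (Bn : E → E →L[ℝ] E)
    (hBsym : ∀ x u v, inner ℝ (Bn x u) v = inner ℝ u (Bn x v))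
    (hBpos : ∀ x u, 0 ≤ inner ℝ u (Bn x u))
    (V : E →L[ℝ] E) (hBV : ∀ x u, inner ℝ u (Bn x u) ≤ inner ℝ u (V u))
    (Fn : ℕ → E → ℝ)
    (hFn : ∀ n x, Fn n x = (1/2) * inner ℝ x (Tn n x) - inner ℝ (rn n) x + Ψ x)
    (gF : ℕ → E → E) (hgF : ∀ n x, HasGradientAt (Fn n) (gF n x) x)
    (Θ : ℕ → E → E → ℝ)
    (hΘ : ∀ n x y, Θ n x y = Fn n y + inner ℝ (gF n y) (x - y) +
      (1/2) * inner ℝ (x - y) ((Tn n + Bn y) (x - y)))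
    (S : ℕ → Submodule ℝ E) (h : ℕ → E)
    (halg : ∀ n, h (n+1) ∈ S n ∧ ∀ y ∈ S n, Θ n (h (n+1)) (h n) ≤ Θ n y (h n))
    (hmaj : ∀ n x, Fn n x ≤ Θ n x (h n))
    (hr : Summable (fun n => ‖rn n - rn (n+1)‖))
    (hT : Summable (fun n => ‖Tn n - Tn (n+1)‖))
    (hrl : Tendsto rn atTop (𝓝 r)) (hTl : Tendsto Tn atTop (𝓝 T))
    (hS : ∀ n, gF n (h n) ∈ S n ∧ h n ∈ S n)
    (h3 : (∀ n, rn n = r ∧ Tn n = T) ∨ (∃ c : ℝ, ∀ x, ‖Bn x x - g x‖ ≤ c))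
    (ε : ℝ) (hε : 0 < ε) (hεT : ∀ u, ε * ‖u‖ ^ 2 ≤ inner ℝ u (T u)) :
    ∃ n0 : ℕ, 1 ≤ n0 ∧ ∀ n ≥ n0,
      (∀ u, inner ℝ u (T u) - ε * ‖u‖ ^ 2 ≤ inner ℝ u ((Tn n + H (h n)) u)) ∧
      ∀ w, (Tn n + H (h n)) w = gF n (h n) → ∀ x,
        Fn n (h n) - Fn n x ≤ (1/2) * (1 + ε) * inner ℝ (gF n (h n)) w := by
  have hHpos := aux_hess_nonneg Ψ g H hg hH hsym hcont hconv
  -- gradient formula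
  have hgrad : ∀ n x, gF n x = Tn n x - rn n + g x := by
    intro n x
    refine (hgF n x).unique ?_
    have h1 := (hasGradientAt_iff_hasFDerivAt.1 (hg x))
    have h2 := (hasGradientAt_iff_hasFDerivAt.1 (aux_inner_grad (rn n) x))
    have h3 := (hasGradientAt_iff_hasFDerivAt.1 (aux_quad_grad (Tn n) (hTsym n) x))
    rw [hasGradientAt_iff_hasFDerivAt]
    have h4 := ((h3.sub h2).add h1)
    rw [show Fn n = fun x => (1/2) * inner ℝ x (Tn n x) - inner ℝ (rn n) x + Ψ x from
      funext (hFn n)]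
    refine h4.congr_fderiv ?_
    simp only [map_sub, map_add]
  have hexp : ∀ n x d, Fn n (x + d) = Fn n x + inner ℝ (gF n x) d + (1/2) * inner ℝ d (Tn n d)
      + (Ψ (x + d) - Ψ x - inner ℝ (g x) d) := by
    intro n x d
    rw [hFn, hFn, aux_expand _ (hTsym n), hgrad]
    simp only [inner_add_left, inner_sub_left, inner_add_right]
    ring
  -- bounds
  obtain ⟨m, hm⟩ := hbdd
  have hm : ∀ x, m ≤ Ψ x := fun x => hm ⟨x, rfl⟩
  obtain ⟨Cr, hCr⟩ := (Metric.isBounded_range_of_tendsto rn hrl).exists_norm_le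
  have hCr : ∀ n, ‖rn n‖ ≤ Cr := fun n => hCr _ ⟨n, rfl⟩
  obtain ⟨CT, hCT⟩ := (Metric.isBounded_range_of_tendsto Tn hTl).exists_norm_le
  have hCT : ∀ n, ‖Tn n‖ ≤ CT := fun n => hCT _ ⟨n, rfl⟩
  have hCr0 : 0 ≤ Cr := (norm_nonneg _).trans (hCr 0)
  have hCT0 : 0 ≤ CT := (norm_nonneg _).trans (hCT 0)
  -- eventual lower bound
  have hev : ∀ᶠ n in atTop, ∀ u, inner ℝ u (T u) - ε / 2 * ‖u‖^2 ≤ inner ℝ u (Tn n u) := by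
    have := (Metric.tendsto_nhds.1 hTl) (ε/2) (by positivity)
    filter_upwards [this] with n hn u
    rw [dist_eq_norm] at hn
    have h1 := (abs_le.1 (aux_abs_inner_clm (Tn n - T) u)).1
    simp only [_root_.sub_apply, inner_sub_right] at h1
    nlinarith [sq_nonneg ‖u‖]
  have hev2 : ∀ᶠ n in atTop, ∀ u, ε / 2 * ‖u‖^2 ≤ inner ℝ u (Tn n u) := by
    filter_upwards [hev] with n hn u
    linarith [hn u, hεT u]
  have hΘself : ∀ n, Θ n (h n) (h n) = Fn n (h n) := by
    intro n; rw [hΘ]; simp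
  have hquad : ∀ t K ρ : ℝ, 0 ≤ t → ε / 2 * t ^ 2 - ρ * t ≤ K →
      t ≤ (4 / ε) * (K + ρ ^ 2 / ε) + 1 := by
    intro t K ρ ht hK
    have h1 : ρ * t ≤ ρ^2/ε + ε / 4 * t^2 := by
      have : 0 ≤ (ρ - ε/2 * t)^2/ε := by positivity
      have e : (ρ - ε/2 * t)^2/ε = ρ^2/ε - ρ * t + ε/4 * t^2 := by field_simp; ring
      linarith
    have h2 : ε / 4 * t^2 ≤ K + ρ^2/ε := by linarith
    have h3 : t^2 ≤ (4 / ε) * (K + ρ ^ 2 / ε) := by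
      calc t^2 = (4/ε) * (ε/4 * t^2) := by field_simp
        _ ≤ _ := by gcongr
    nlinarith [sq_nonneg (t-1)]
  -- boundedness of the iterates
  have hbound : ∃ C, ∀ n, ‖h n‖ ≤ C := by
    rcases h3 with h3 | ⟨c, hc⟩
    · have hdec : ∀ n, Fn 0 (h n) ≤ Fn 0 (h 0) := by
        have hF0 : ∀ n x, Fn n x = Fn 0 x := by
          intro n x; rw [hFn, hFn, (h3 n).1, (h3 n).2, (h3 0).1, (h3 0).2]
        intro n
        induction n with
        | zero => exact le_rfl
        | succ k ih =>
          refine le_trans ?_ ih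
          have h1 := hmaj k (h (k+1))
          have h2 := (halg k).2 (h k) (hS k).2
          rw [hΘself] at h2
          rw [← hF0 k, ← hF0 k]
          linarith
      refine ⟨_, fun n => hquad ‖h n‖ (Fn 0 (h 0) - m) Cr (norm_nonneg _) ?_⟩
      have h1 := hdec n
      rw [hFn, (h3 0).2] at h1
      have h2 := hεT (h n)
      have h4 := real_inner_le_norm (rn 0) (h n)
      have h5 : ‖rn 0‖ * ‖h n‖ ≤ Cr * ‖h n‖ := by gcongr; exact hCr 0
      linarith [hm (h n)]
    · obtain ⟨n1, hn1⟩ := eventually_atTop.1 hev2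
      have hb : ∀ n ≥ n1, ‖h (n+1)‖ ≤ (4 / ε) * (0 + (2*(Cr + c)) ^ 2 / ε) + 1 := by
        intro n hn
        -- the surrogate comparison with 0
        have h1 := (halg n).2 0 (S n).zero_mem
        rw [hΘ, hΘ] at h1
        set A := Tn n + Bn (h n) with hA
        have hAs : ∀ u v, inner ℝ (A u) v = inner ℝ u (A v) := by
          intro u v
          simp only [hA, _root_.add_apply, inner_add_left, inner_add_right,
            hTsym, hBsym]
        have e1 := aux_expand A hAs (h (n+1)) (- h n)
        have e2 := aux_expand A hAs 0 (- h n)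
        rw [← sub_eq_add_neg] at e1 e2
        rw [e1, e2] at h1
        simp only [inner_sub_right, inner_neg_right, map_zero, inner_zero_right,
          inner_zero_left] at h1
        have e3 : inner ℝ (A (h (n+1))) (h n) = inner ℝ (A (h n)) (h (n+1)) := by
          rw [hAs, real_inner_comm]
        rw [e3] at h1
        have e4 : inner ℝ (gF n (h n)) (h (n+1)) - inner ℝ (A (h n)) (h (n+1)) =
            - inner ℝ (rn n + (Bn (h n) (h n) - g (h n))) (h (n+1)) := by
          rw [← inner_sub_left, ← inner_neg_left]
          congr 1
          rw [hgrad, hA, _root_.add_apply]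
          abel
        have e5 : inner ℝ (rn n + (Bn (h n) (h n) - g (h n))) (h (n+1)) ≤
            (Cr + c) * ‖h (n+1)‖ := by
          refine (real_inner_le_norm _ _).trans ?_
          gcongr
          refine (norm_add_le _ _).trans ?_
          gcongr
          · exact hCr n
          · exact hc _
        have e6 : ε / 2 * ‖h (n+1)‖^2 ≤ inner ℝ (h (n+1)) (A (h (n+1))) := by
          rw [hA, _root_.add_apply, inner_add_right]
          linarith [hn1 n hn (h (n+1)), hBpos (h n) (h (n+1))]
        refine hquad _ _ _ (norm_nonneg _) ?_
        linarith
      have hb' : ∀ n ≥ n1 + 1, ‖h n‖ ≤ (4 / ε) * (0 + (2*(Cr + c)) ^ 2 / ε) + 1 := by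
        intro n hn
        obtain ⟨k, rfl⟩ : ∃ k, n = k + 1 := ⟨n - 1, by omega⟩
        exact hb k (by omega)
      refine ⟨max ((4 / ε) * (0 + (2*(Cr + c)) ^ 2 / ε) + 1)
        (∑ i ∈ Finset.range (n1+1), ‖h i‖), fun n => ?_⟩
      by_cases hn : n1 + 1 ≤ n
      · exact (hb' n hn).trans (le_max_left _ _)
      · refine le_trans ?_ (le_max_right _ _)
        exact Finset.single_le_sum (f := fun i => ‖h i‖) (fun i _ => norm_nonneg _)
          (Finset.mem_range.2 (by omega))
  obtain ⟨C, hC⟩ := hbound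
  have hC0 : 0 ≤ C := (norm_nonneg _).trans (hC 0)
  -- gradients tend to zero
  have hG : Tendsto (fun n => ‖gF n (h n)‖) atTop (𝓝 0) := by
    set L := CT + ‖V‖ + 1 with hL
    have hLpos : 0 < L := by positivity
    refine aux_grad_zero (fun n => Fn n (h n))
      (fun n => (1/2) * C^2 * ‖Tn n - Tn (n+1)‖ + C * ‖rn n - rn (n+1)‖)
      _ (1 / (2 * L)) (m - Cr * C) (by positivity)
      ((hT.mul_left _).add (hr.mul_left _)) (fun n => by positivity)
      (fun n => norm_nonneg _) ?_ ?_
    · intro n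
      simp only [hFn]
      have h1 := real_inner_le_norm (rn n) (h n)
      have h2 : ‖rn n‖ * ‖h n‖ ≤ Cr * C := by
        gcongr
        · exact hCr n
        · exact hC n
      linarith [hTpos n (h n), hm (h n)]
    · intro n
      have h1 := hmaj n (h (n+1))
      have h2 := (halg n).2 (h n - (1/L) • gF n (h n))
        ((S n).sub_mem (hS n).2 ((S n).smul_mem _ (hS n).1))
      rw [hΘ n (h n - _)] at h2
      have e0 : h n - (1/L) • gF n (h n) - h n = -((1/L) • gF n (h n)) := by abel
      rw [e0] at h2
      set γ := gF n (h n) with hγ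
      have e1 : inner ℝ γ (-((1/L) • γ)) = -(1/L * ‖γ‖^2) := by
        rw [inner_neg_right, inner_smul_right, real_inner_self_eq_norm_sq]
      have e2 : inner ℝ (-((1/L) • γ)) ((Tn n + Bn (h n)) (-((1/L) • γ))) ≤
          1/L * ‖γ‖^2 := by
        simp only [map_neg, inner_neg_neg, map_smul, inner_smul_right, inner_smul_left]
        simp only [_root_.add_apply, inner_add_right]
        have a1 := (abs_le.1 (aux_abs_inner_clm (Tn n) γ)).2
        have a2 := (abs_le.1 (aux_abs_inner_clm V γ)).2
        have a3 := hBV (h n) γ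
        have a4 : inner ℝ γ (Tn n γ) + inner ℝ γ (Bn (h n) γ) ≤ L * ‖γ‖^2 := by
          have := hCT n
          nlinarith [sq_nonneg ‖γ‖]
        simp only [conj_trivial]
        calc 1/L * (1/L * (inner ℝ γ (Tn n γ) + inner ℝ γ (Bn (h n) γ)))
            ≤ 1/L * (1/L * (L * ‖γ‖^2)) := by gcongr
          _ = _ := by field_simp
      rw [e1] at h2
      have e3 : Fn (n+1) (h (n+1)) ≤ Fn n (h (n+1)) +
          ((1/2) * C^2 * ‖Tn n - Tn (n+1)‖ + C * ‖rn n - rn (n+1)‖) := by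
        rw [hFn, hFn]
        have a1 := (abs_le.1 (aux_abs_inner_clm (Tn n - Tn (n+1)) (h (n+1)))).1
        simp only [_root_.sub_apply, inner_sub_right] at a1
        have a2 := real_inner_le_norm (rn n - rn (n+1)) (h (n+1))
        rw [inner_sub_left] at a2
        have a3 : ‖rn n - rn (n+1)‖ * ‖h (n+1)‖ ≤ ‖rn n - rn (n+1)‖ * C := by
          gcongr; exact hC _
        have a4 : ‖Tn n - Tn (n+1)‖ * ‖h (n+1)‖^2 ≤ ‖Tn n - Tn (n+1)‖ * C^2 := by
          gcongr; exact hC _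
        linarith
      have e4 : 1 / (2 * L) * ‖γ‖^2 = 1/2 * (1/L * ‖γ‖^2) := by field_simp
      rw [e4]
      linarith
  -- conclusion
  obtain ⟨η, hη, ht⟩ := aux_taylor Ψ g H hg hH hsym hcont C (ε * (ε/2) / (2 * (1 + ε)))
    (by positivity)
  have hev3 : ∀ᶠ n in atTop, ‖gF n (h n)‖ ≤ ε / 4 * η :=
    hG.eventually_le_const (by positivity)
  obtain ⟨n0, hn0⟩ := eventually_atTop.1 (hev.and (hev2.and hev3))
  refine ⟨n0 + 1, by omega, fun n hn => ?_⟩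
  obtain ⟨c1, c2, c3⟩ := hn0 n (by omega)
  refine ⟨fun u => ?_, fun w hw x => ?_⟩
  · rw [_root_.add_apply, inner_add_right]
    nlinarith [c1 u, hHpos (h n) u, sq_nonneg ‖u‖]
  · have hPpos : ∀ u, 0 ≤ inner ℝ u ((Tn n + H (h n)) u) := by
      intro u
      rw [_root_.add_apply, inner_add_right]
      linarith [hTpos n u, hHpos (h n) u]
    have hPsym : ∀ u v, inner ℝ ((Tn n + H (h n)) u) v = inner ℝ u ((Tn n + H (h n)) v) := by
      intro u v
      simp only [_root_.add_apply, inner_add_left, inner_add_right, hTsym, hsym]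
    obtain ⟨d, rfl⟩ : ∃ d, x = h n + d := ⟨x - h n, by abel⟩
    rw [hexp]
    by_cases hd : ‖d‖ ≤ η
    · have t1 := (abs_le.1 (ht (h n) (hC n) d hd)).1
      have t2 := aux_sq _ hPsym hPpos _ w d hw ε hε
      have t3 : ε / 2 * ‖d‖^2 ≤ inner ℝ d ((Tn n + H (h n)) d) := by
        rw [_root_.add_apply, inner_add_right]
        linarith [c2 d, hHpos (h n) d]
      have t4 : ε * (ε/2) / (2 * (1 + ε)) * ‖d‖^2 ≤
          ε / (2 * (1 + ε)) * inner ℝ d ((Tn n + H (h n)) d) := by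
        calc _ = ε / (2 * (1 + ε)) * (ε / 2 * ‖d‖^2) := by ring
          _ ≤ _ := by gcongr
      have t5 : ε / (2 * (1 + ε)) * inner ℝ d ((Tn n + H (h n)) d) +
          1 / (2 * (1 + ε)) * inner ℝ d ((Tn n + H (h n)) d) =
          1/2 * (inner ℝ d (Tn n d) + inner ℝ d (H (h n) d)) := by
        rw [← inner_add_right, ← _root_.add_apply]
        field_simp
        ring
      linarith
    · push Not at hd
      have s1 := aux_conv_grad Ψ g hg hconv (h n) d
      have s2 := (abs_le.1 (abs_real_inner_le_norm (gF n (h n)) d)).1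
      have s3 := c2 d
      have s4 : 0 ≤ inner ℝ (gF n (h n)) w := by
        rw [← hw, real_inner_comm]; exact hPpos w
      have s5 : ‖gF n (h n)‖ * ‖d‖ ≤ ε / 4 * ‖d‖ ^ 2 := by
        rw [sq, ← mul_assoc]
        gcongr
        refine c3.trans ?_
        gcongr
      have s6 : 0 ≤ (1/2) * (1 + ε) * inner ℝ (gF n (h n)) w := by positivity
      linarith

end Aux

section Conv

/-- The continuous linear map attached to a square matrix. -/
noncomputable def opM {N : ℕ} : Matrix (Fin N) (Fin N) ℝ →ₗ[ℝ]
    (EuclideanSpace ℝ (Fin N) →L[ℝ] EuclideanSpace ℝ (Fin N)) :=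
  (LinearMap.toContinuousLinearMap (𝕜 := ℝ) (E := EuclideanSpace ℝ (Fin N))
    (F' := EuclideanSpace ℝ (Fin N))).toLinearMap ∘ₗ
    (Matrix.toEuclideanLin (𝕜 := ℝ) (m := Fin N) (n := Fin N)).toLinearMap

lemma opM_def {N : ℕ} (A : Matrix (Fin N) (Fin N) ℝ) :
    opM A = LinearMap.toContinuousLinearMap (Matrix.toEuclideanLin A) := rfl

lemma opM_apply {N : ℕ} (A : Matrix (Fin N) (Fin N) ℝ) (x : EuclideanSpace ℝ (Fin N)) :
    opM A x = toEuc (A.mulVec (ofEuc x)) := rfl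

lemma dot_eq_inner {N : ℕ} (a b : EuclideanSpace ℝ (Fin N)) :
    ofEuc a ⬝ᵥ ofEuc b = inner ℝ a b := by
  rw [EuclideanSpace.inner_eq_star_dotProduct, dotProduct_comm]
  simp [ofEuc]

lemma dot_toEuc {N : ℕ} (a : EuclideanSpace ℝ (Fin N)) (v : Fin N → ℝ) :
    ofEuc a ⬝ᵥ v = inner ℝ a (toEuc v) := by
  rw [← dot_eq_inner]; rfl

lemma qf_eq {N : ℕ} (A : Matrix (Fin N) (Fin N) ℝ) (x : EuclideanSpace ℝ (Fin N)) :
    qf A x = inner ℝ x (opM A x) := by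
  rw [qf, dot_toEuc]; rfl

lemma opM_sym {N : ℕ} (A : Matrix (Fin N) (Fin N) ℝ) (hA : A.IsHermitian)
    (u v : EuclideanSpace ℝ (Fin N)) :
    inner ℝ (opM A u) v = inner ℝ u (opM A v) := by
  have hA' : Aᵀ = A := by simpa [Matrix.IsHermitian, conjTranspose_eq_transpose_of_trivial] using hA
  rw [← dot_eq_inner, opM_apply, opM_apply, ← dot_toEuc]
  change (A *ᵥ ofEuc u) ⬝ᵥ ofEuc v = _
  rw [dotProduct_mulVec, ← mulVec_transpose, hA']

lemma psd_iff {N : ℕ} (A : Matrix (Fin N) (Fin N) ℝ) :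
    A.PosSemidef ↔ A.IsHermitian ∧ ∀ u, 0 ≤ inner ℝ u (opM A u) := by
  rw [Matrix.posSemidef_iff_dotProduct_mulVec]
  refine and_congr_right fun _ => ?_
  constructor
  · intro h u
    have := h (ofEuc u)
    rw [star_trivial, dot_toEuc] at this
    exact this
  · intro h v
    have := h (toEuc v)
    rw [opM_apply, ← dot_toEuc] at this
    rw [star_trivial]
    exact this

lemma opM_norm {N : ℕ} (A : Matrix (Fin N) (Fin N) ℝ) :
    ‖opM A‖ ≤ ∑ i, ∑ j, |A i j| * ‖opM (Matrix.single i j (1:ℝ))‖ := by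
  conv_lhs => rw [Matrix.matrix_eq_sum_single A]
  rw [map_sum]
  refine (norm_sum_le _ _).trans (Finset.sum_le_sum fun i _ => ?_)
  rw [map_sum]
  refine (norm_sum_le _ _).trans (Finset.sum_le_sum fun j _ => ?_)
  have : Matrix.single i j (A i j) = A i j • Matrix.single i j (1:ℝ) := by
    rw [Matrix.smul_single]; simp
  rw [this, map_smul, norm_smul, Real.norm_eq_abs]

end Conv

theorem mm_lemma_suboptimality_bound
    {N : ℕ} (hN : 0 < N)
    (R : Matrix (Fin N) (Fin N) ℝ) (hRpd : R.PosDef)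
    (r : EuclideanSpace ℝ (Fin N))
    (Ψ : EuclideanSpace ℝ (Fin N) → ℝ)
    (hΨbdd : BddBelow (Set.range Ψ))
    (hΨconv : ConvexOn ℝ Set.univ Ψ)
    (hΨC2 : ContDiff ℝ 2 Ψ)
    (gradΨ : EuclideanSpace ℝ (Fin N) → EuclideanSpace ℝ (Fin N))
    (hgradΨ : ∀ x, HasGradientAt Ψ (gradΨ x) x)
    (hessΨ : EuclideanSpace ℝ (Fin N) → Matrix (Fin N) (Fin N) ℝ)
    (hhessΨ : ∀ x, HasFDerivAt gradΨ
      (LinearMap.toContinuousLinearMap (Matrix.toEuclideanLin (hessΨ x))) x)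
    (F : EuclideanSpace ℝ (Fin N) → ℝ)
    (hF : ∀ x, F x = (1/2) * qf R x - ofEuc r ⬝ᵥ ofEuc x + Ψ x)
    (Rn : ℕ → Matrix (Fin N) (Fin N) ℝ) (hRnpsd : ∀ n, (Rn n).PosSemidef)
    (rn : ℕ → EuclideanSpace ℝ (Fin N))
    (Fn : ℕ → EuclideanSpace ℝ (Fin N) → ℝ)
    (hFn : ∀ n x, Fn n x = (1/2) * qf (Rn n) x - ofEuc (rn n) ⬝ᵥ ofEuc x + Ψ x)
    (B : EuclideanSpace ℝ (Fin N) → Matrix (Fin N) (Fin N) ℝ)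
    (hBpsd : ∀ x, (B x).PosSemidef)
    (An : ℕ → EuclideanSpace ℝ (Fin N) → Matrix (Fin N) (Fin N) ℝ)
    (hAn : ∀ n x, An n x = Rn n + B x)
    (gradFn : ℕ → EuclideanSpace ℝ (Fin N) → EuclideanSpace ℝ (Fin N))
    (hgradFn : ∀ n x, HasGradientAt (Fn n) (gradFn n x) x)
    (Θ : ℕ → EuclideanSpace ℝ (Fin N) → EuclideanSpace ℝ (Fin N) → ℝ)
    (hΘ : ∀ n x y, Θ n x y =
      Fn n y + ofEuc (gradFn n y) ⬝ᵥ ofEuc (x - y) + (1/2) * qf (An n y) (x - y))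
    (M : ℕ → ℕ) (D : (n : ℕ) → Matrix (Fin N) (Fin (M n)) ℝ)
    (h : ℕ → EuclideanSpace ℝ (Fin N))
    (halg : ∀ n, h (n+1) ∈ rangeD (D n) ∧
      ∀ y ∈ rangeD (D n), Θ n (h (n+1)) (h n) ≤ Θ n y (h n))
    (hmaj : ∀ n x, Fn n x ≤ Θ n x (h n))
    (ha1r : Summable (fun n => ‖rn n - rn (n+1)‖))
    (ha1R : ∀ i j, Summable (fun n => |Rn n i j - Rn (n+1) i j|))
    (ha1rlim : Tendsto rn atTop (𝓝 r))
    (ha1Rlim : ∀ i j, Tendsto (fun n => Rn n i j) atTop (𝓝 (R i j)))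
    (ha2i : ∀ n, gradFn n (h n) ∈ rangeD (D n) ∧ h n ∈ rangeD (D n))
    (V : Matrix (Fin N) (Fin N) ℝ) (hVpd : V.PosDef)
    (ha2ii : ∀ x, (B x - hessΨ x).PosSemidef ∧ (V - B x).PosSemidef)
    (ha2iii : (∀ n, rn n = r ∧ Rn n = R) ∨
      (∃ c : ℝ, ∀ x, ‖mulE (B x) x - gradΨ x‖ ≤ c))
    (ε : ℝ) (hε : 0 < ε)
    (hεR : (R - ε • (1 : Matrix (Fin N) (Fin N) ℝ)).PosDef)
    :
    ∃ nε : ℕ, 1 ≤ nε ∧ ∀ n ≥ nε,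
      ((Rn n + hessΨ (h n)) - (R - ε • (1 : Matrix (Fin N) (Fin N) ℝ))).PosSemidef ∧
      (Rn n + hessΨ (h n)).PosDef ∧
      Fn n (h n) - (⨅ x, Fn n x) ≤
        (1/2) * (1 + ε) *
          (ofEuc (gradFn n (h n)) ⬝ᵥ
            (Rn n + hessΨ (h n))⁻¹.mulVec (ofEuc (gradFn n (h n)))) := by
  have hHherm : ∀ x, (hessΨ x).IsHermitian := by
    intro x
    have h1 := (hBpsd x).1.sub (ha2ii x).1.1
    simpa using h1
  have hcont : Continuous (fun x => opM (hessΨ x)) := by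
    have e1 : gradΨ = fun x => (InnerProductSpace.toDual ℝ _).symm (fderiv ℝ Ψ x) := by
      funext x
      rw [(hasGradientAt_iff_hasFDerivAt.1 (hgradΨ x)).fderiv]
      simp
    have e2 : ContDiff ℝ 1 gradΨ := by
      rw [e1]
      exact (InnerProductSpace.toDual ℝ (EuclideanSpace ℝ (Fin N))).symm.contDiff.comp
        (hΨC2.fderiv_right (m := 1) (by norm_num))
    have e3 : (fun x => opM (hessΨ x)) = fderiv ℝ gradΨ := by
      funext x
      rw [(hhessΨ x).fderiv]
      rfl
    rw [e3]
    exact e2.continuous_fderiv (by norm_num)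
  have hTl : Tendsto (fun n => opM (Rn n)) atTop (𝓝 (opM R)) := by
    rw [tendsto_iff_norm_sub_tendsto_zero]
    have h1 : Tendsto (fun n => ∑ i, ∑ j, |(Rn n - R) i j| *
        ‖opM (Matrix.single i j (1:ℝ))‖) atTop (𝓝 0) := by
      have : (0:ℝ) = ∑ i : Fin N, ∑ j : Fin N, |R i j - R i j| *
        ‖opM (Matrix.single i j (1:ℝ))‖ := by simp
      rw [this]
      refine tendsto_finsetSum _ fun i _ => tendsto_finsetSum _ fun j _ => ?_
      exact (((ha1Rlim i j).sub_const _).abs).mul_const _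
    refine squeeze_zero (fun n => norm_nonneg _) (fun n => ?_) h1
    rw [← map_sub]
    exact opM_norm _
  have hTs : Summable (fun n => ‖opM (Rn n) - opM (Rn (n+1))‖) := by
    have h1 : Summable (fun n => ∑ i, ∑ j, |(Rn n - Rn (n+1)) i j| *
        ‖opM (Matrix.single i j (1:ℝ))‖) :=
      summable_sum fun i _ => summable_sum fun j _ => (ha1R i j).mul_right _
    refine Summable.of_nonneg_of_le (fun n => norm_nonneg _) (fun n => ?_) h1
    rw [← map_sub]
    exact opM_norm _
  have hone : ∀ u : EuclideanSpace ℝ (Fin N),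
      inner ℝ u (opM (R - ε • (1 : Matrix (Fin N) (Fin N) ℝ)) u) =
        inner ℝ u (opM R u) - ε * ‖u‖ ^ 2 := by
    intro u
    have : opM (1 : Matrix (Fin N) (Fin N) ℝ) u = u := by
      rw [opM_apply, one_mulVec]; rfl
    rw [map_sub, map_smul, _root_.sub_apply, _root_.smul_apply, this, inner_sub_right,
      inner_smul_right, real_inner_self_eq_norm_sq]
  have hεT : ∀ u : EuclideanSpace ℝ (Fin N), ε * ‖u‖ ^ 2 ≤ inner ℝ u (opM R u) := by
    intro u
    have := ((psd_iff _).1 hεR.posSemidef).2 u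
    rw [hone] at this
    linarith
  have hmem : ∀ n x, x ∈ rangeD (D n) ↔
      x ∈ LinearMap.range ((WithLp.linearEquiv 2 ℝ (Fin N → ℝ)).symm.toLinearMap ∘ₗ
        (D n).mulVecLin) := by
    intro n x
    constructor
    · rintro ⟨u, rfl⟩
      exact ⟨u, rfl⟩
    · rintro ⟨u, rfl⟩
      exact ⟨u, rfl⟩
  obtain ⟨n0, hn0, hmain⟩ := aux_main (opM R) (fun n => opM (Rn n)) r rn Ψ gradΨ
    (fun x => opM (hessΨ x)) hΨbdd hΨconv hgradΨ hhessΨ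
    (fun x => opM_sym _ (hHherm x)) hcont (fun n => opM_sym _ (hRnpsd n).1)
    (fun n => ((psd_iff _).1 (hRnpsd n)).2) (fun x => opM (B x))
    (fun x => opM_sym _ (hBpsd x).1) (fun x => ((psd_iff _).1 (hBpsd x)).2) (opM V)
    (fun x u => by
      have := ((psd_iff _).1 (ha2ii x).2).2 u
      rw [map_sub, _root_.sub_apply, inner_sub_right] at this
      linarith) Fn
    (fun n x => by rw [hFn, qf_eq, dot_eq_inner]) gradFn hgradFn Θ
    (fun n x y => by rw [hΘ, qf_eq, dot_eq_inner, hAn, map_add])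
    (fun n => LinearMap.range ((WithLp.linearEquiv 2 ℝ (Fin N → ℝ)).symm.toLinearMap ∘ₗ
        (D n).mulVecLin)) h
    (fun n => ⟨(hmem n _).1 (halg n).1, fun y hy => (halg n).2 y ((hmem n y).2 hy)⟩)
    hmaj ha1r hTs ha1rlim hTl
    (fun n => ⟨(hmem n _).1 (ha2i n).1, (hmem n _).1 (ha2i n).2⟩)
    (by
      rcases ha2iii with h1 | ⟨c, hc⟩
      · exact Or.inl fun n => ⟨(h1 n).1, by simp only [(h1 n).2]⟩
      · exact Or.inr ⟨c, hc⟩) ε hε hεT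
  refine ⟨n0, hn0, fun n hn => ?_⟩
  obtain ⟨m1, m2⟩ := hmain n hn
  have hpsd : ((Rn n + hessΨ (h n)) -
      (R - ε • (1 : Matrix (Fin N) (Fin N) ℝ))).PosSemidef := by
    rw [psd_iff]
    refine ⟨((hRnpsd n).1.add (hHherm _)).sub hεR.1, fun u => ?_⟩
    rw [map_sub, _root_.sub_apply, inner_sub_right, hone, map_add]
    linarith [m1 u]
  have hpd : (Rn n + hessΨ (h n)).PosDef := by
    have := hεR.add_posSemidef hpsd
    simpa using this
  refine ⟨hpsd, hpd, ?_⟩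
  have hw := m2 (toEuc ((Rn n + hessΨ (h n))⁻¹.mulVec (ofEuc (gradFn n (h n))))) (by
    have hu : IsUnit (Rn n + hessΨ (h n)).det := hpd.det_pos.ne'.isUnit
    rw [← map_add, opM_apply]
    change toEuc ((Rn n + hessΨ (h n)) *ᵥ
      ((Rn n + hessΨ (h n))⁻¹ *ᵥ (ofEuc (gradFn n (h n))))) = _
    rw [mulVec_mulVec, Matrix.mul_nonsing_inv _ hu, one_mulVec]
    rfl)
  rw [dot_toEuc]
  have := le_ciInf (f := fun x => Fn n x) (fun x => sub_le_comm.1 (hw x))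
  linarith
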